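/- arXiv:math/0606401 — 2 statements merged into one kernel-verified Lean document; each statement's English description precedes it below -/
import Mathlib

section
/- Fix integers n, k ≥ 1, and let A be a connection form on ℝⁿ with curvature F. For every smooth ℝᵏ-valued 1-form ψ on ℝⁿ, every index b and every point x, −Σ_b D_b((M^D ψ)_b)(x) = Σ_{a,b} (D_a F_{ab})(x) ψ_b(x), where D_a F_{ab} = ∂_a F_{ab} + A_a F_{ab} − F_{ab} A_a and D_b applied to the ℝᵏ-valued map (M^D ψ)_b means ∂_b + A_b. (Flat-chart form of the second part of Lemma 3.1: δ^D M^D = −ι(δ^D F).) -/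
noncomputable section

/-- Points of `ℝⁿ`. -/
abbrev Vec (n : ℕ) := Fin n → ℝ

/-- Real `k × k` matrices, as plain functions. -/
abbrev Mat (k : ℕ) := Fin k → Fin k → ℝ

/-- Matrix product. -/
def matMul {k : ℕ} (M N : Mat k) : Mat k := fun i j => ∑ l, M i l * N l j

/-- Matrix acting on a vector. -/
def matVec {k : ℕ} (M : Mat k) (v : Fin k → ℝ) : Fin k → ℝ := fun i => ∑ j, M i j * v j

/-- The identity matrix. -/
def idMat (k : ℕ) : Mat k := fun i j => if i = j then 1 else 0

/-- Partial derivative `∂_a f` in the `a`-th coordinate direction. -/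
def pd {n : ℕ} {E : Type*} [NormedAddCommGroup E] [NormedSpace ℝ E]
    (a : Fin n) (f : Vec n → E) (x : Vec n) : E :=
  fderiv ℝ f x (Pi.single a 1)

/-- The coupled covariant derivative `D_a φ = ∂_a φ + A_a φ` on `ℝᵏ`-valued maps. -/
def Dv {n k : ℕ} (A : Fin n → Vec n → Mat k) (a : Fin n)
    (φ : Vec n → Fin k → ℝ) (x : Vec n) : Fin k → ℝ :=
  pd a φ x + matVec (A a x) (φ x)

/-- The covariant derivative `D_a S = ∂_a S + A_a S − S A_a` on matrix-valued maps. -/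
def Dm {n k : ℕ} (A : Fin n → Vec n → Mat k) (a : Fin n)
    (S : Vec n → Mat k) (x : Vec n) : Mat k :=
  pd a S x + matMul (A a x) (S x) - matMul (S x) (A a x)

/-- The curvature `F_{ab} = ∂_a A_b − ∂_b A_a + A_a A_b − A_b A_a` of a connection form. -/
def curv {n k : ℕ} (A : Fin n → Vec n → Mat k) (a b : Fin n) (x : Vec n) : Mat k :=
  pd a (A b) x - pd b (A a) x + matMul (A a x) (A b x) - matMul (A b x) (A a x)

/-- The middle operator `(M^D ψ)_b = −Σ_a D_a(D_a ψ_b − D_b ψ_a) − Σ_a F_{ba} ψ_a`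
of the Yang–Mills detour sequence, on `ℝᵏ`-valued 1-forms. -/
def MD {n k : ℕ} (A : Fin n → Vec n → Mat k) (ψ : Fin n → Vec n → Fin k → ℝ)
    (b : Fin n) (x : Vec n) : Fin k → ℝ :=
  -(∑ a, Dv A a (fun y => Dv A a (ψ b) y - Dv A b (ψ a) y) x)
    - ∑ a, matVec (curv A b a x) (ψ a x)

/- HELPERS -/
section helpers
variable {n k : ℕ}

abbrev Sm {n : ℕ} {E : Type*} [NormedAddCommGroup E] [NormedSpace ℝ E] (f : Vec n → E) : Prop :=
  ContDiff ℝ (⊤ : ℕ∞) f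

theorem Sm.diff {E : Type*} [NormedAddCommGroup E] [NormedSpace ℝ E] {f : Vec n → E}
    (h : Sm f) : Differentiable ℝ f := ContDiff.differentiable h (by simp)

theorem sm_pd {E : Type*} [NormedAddCommGroup E] [NormedSpace ℝ E] {f : Vec n → E}
    (h : Sm f) (a : Fin n) : Sm (fun x => pd a f x) := by
  have h1 : Sm (fderiv ℝ f) := ContDiff.fderiv_right h (by simp)
  exact h1.clm_apply contDiff_const

theorem sm_matVec {S : Vec n → Mat k} {φ : Vec n → Fin k → ℝ} (hS : Sm S) (hφ : Sm φ) :
    Sm (fun x => matVec (S x) (φ x)) := by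
  refine contDiff_pi.2 fun i => ?_
  refine ContDiff.sum fun j _ => ?_
  exact (contDiff_pi.1 (contDiff_pi.1 hS i) j).mul (contDiff_pi.1 hφ j)

theorem sm_matMul {S T : Vec n → Mat k} (hS : Sm S) (hT : Sm T) :
    Sm (fun x => matMul (S x) (T x)) := by
  refine contDiff_pi.2 fun i => contDiff_pi.2 fun j => ?_
  refine ContDiff.sum fun l _ => ?_
  exact (contDiff_pi.1 (contDiff_pi.1 hS i) l).mul (contDiff_pi.1 (contDiff_pi.1 hT l) j)

theorem sm_Dv {A : Fin n → Vec n → Mat k} (hA : ∀ a, Sm (A a)) {φ : Vec n → Fin k → ℝ}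
    (hφ : Sm φ) (a : Fin n) : Sm (fun x => Dv A a φ x) :=
  (sm_pd hφ a).add (sm_matVec (hA a) hφ)

theorem sm_curv {A : Fin n → Vec n → Mat k} (hA : ∀ a, Sm (A a)) (a b : Fin n) :
    Sm (fun x => curv A a b x) :=
  (((sm_pd (hA b) a).sub (sm_pd (hA a) b)).add (sm_matMul (hA a) (hA b))).sub
    (sm_matMul (hA b) (hA a))

theorem matVec_add (M : Mat k) (v w : Fin k → ℝ) :
    matVec M (v + w) = matVec M v + matVec M w := by
  ext i; simp [matVec, mul_add, Finset.sum_add_distrib]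

theorem matVec_neg (M : Mat k) (v : Fin k → ℝ) : matVec M (-v) = -matVec M v := by
  ext i; simp [matVec]

theorem matVec_sub (M : Mat k) (v w : Fin k → ℝ) :
    matVec M (v - w) = matVec M v - matVec M w := by
  ext i; simp [matVec, mul_sub, Finset.sum_sub_distrib]

theorem matVec_sum {ι : Type*} (s : Finset ι) (M : Mat k) (v : ι → Fin k → ℝ) :
    matVec M (∑ a ∈ s, v a) = ∑ a ∈ s, matVec M (v a) := by
  ext i; simp only [matVec, Finset.sum_apply, Finset.mul_sum]; exact Finset.sum_comm

theorem add_matVec (M N : Mat k) (v : Fin k → ℝ) :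
    matVec (M + N) v = matVec M v + matVec N v := by
  ext i; simp [matVec, add_mul, Finset.sum_add_distrib]

theorem sub_matVec (M N : Mat k) (v : Fin k → ℝ) :
    matVec (M - N) v = matVec M v - matVec N v := by
  ext i; simp [matVec, sub_mul, Finset.sum_sub_distrib]

theorem sum_matVec {ι : Type*} (s : Finset ι) (M : ι → Mat k) (v : Fin k → ℝ) :
    matVec (∑ a ∈ s, M a) v = ∑ a ∈ s, matVec (M a) v := by
  ext i; simp only [matVec, Finset.sum_apply, Finset.sum_mul]; exact Finset.sum_comm

theorem matMul_matVec (M N : Mat k) (v : Fin k → ℝ) :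
    matVec (matMul M N) v = matVec M (matVec N v) := by
  ext i; simp only [matVec, matMul, Finset.sum_mul, Finset.mul_sum, mul_assoc]
  exact Finset.sum_comm

theorem pd_comp {ι : Type*} [Fintype ι] {E : Type*} [NormedAddCommGroup E] [NormedSpace ℝ E]
    {f : Vec n → ι → E} (h : Differentiable ℝ f) (a : Fin n)
    (x : Vec n) (i : ι) : pd a f x i = pd a (fun y => f y i) x := by
  unfold pd
  rw [fderiv_pi (fun i => (differentiable_pi.1 h i) x)]
  rfl

theorem pd_add {E : Type*} [NormedAddCommGroup E] [NormedSpace ℝ E] {f g : Vec n → E}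
    (hf : Sm f) (hg : Sm g) (a : Fin n) (x : Vec n) :
    pd a (fun y => f y + g y) x = pd a f x + pd a g x := by
  unfold pd; rw [fderiv_fun_add (hf.diff x) (hg.diff x)]; rfl

theorem pd_sub {E : Type*} [NormedAddCommGroup E] [NormedSpace ℝ E] {f g : Vec n → E}
    (hf : Sm f) (hg : Sm g) (a : Fin n) (x : Vec n) :
    pd a (fun y => f y - g y) x = pd a f x - pd a g x := by
  unfold pd; rw [fderiv_fun_sub (hf.diff x) (hg.diff x)]; rfl

theorem pd_matVec {S : Vec n → Mat k} {φ : Vec n → Fin k → ℝ} (hS : Sm S) (hφ : Sm φ)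
    (a : Fin n) (x : Vec n) :
    pd a (fun y => matVec (S y) (φ y)) x = matVec (pd a S x) (φ x) + matVec (S x) (pd a φ x) := by
  ext i
  rw [pd_comp (sm_matVec hS hφ).diff]
  have hSi : ∀ j, Sm (fun y => S y i j) := fun j => contDiff_pi.1 (contDiff_pi.1 hS i) j
  have hφi : ∀ j, Sm (fun y => φ y j) := fun j => contDiff_pi.1 hφ j
  have h2 : ∀ j, pd a S x i j = pd a (fun y => S y i j) x := fun j => by
    rw [pd_comp hS.diff, pd_comp (f := fun y => S y i) (Sm.diff (contDiff_pi.1 hS i))]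
  simp only [matVec, Pi.add_apply, h2, pd_comp hφ.diff]
  unfold pd
  rw [fderiv_fun_sum (A := fun j y => S y i j * φ y j)
    (fun j _ => ((hSi j).diff x).mul ((hφi j).diff x))]
  rw [← Finset.sum_add_distrib, ContinuousLinearMap.sum_apply]
  refine Finset.sum_congr rfl fun j _ => ?_
  rw [fderiv_fun_mul ((hSi j).diff x) ((hφi j).diff x)]
  simp; ring

theorem pd_comm {E : Type*} [NormedAddCommGroup E] [NormedSpace ℝ E] {f : Vec n → E}
    (h : Sm f) (a b : Fin n) (x : Vec n) :
    pd a (fun y => pd b f y) x = pd b (fun y => pd a f y) x := by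
  have h1 : Sm (fderiv ℝ f) := ContDiff.fderiv_right h (by simp)
  have key : ∀ v w : Vec n, fderiv ℝ (fun y => fderiv ℝ f y v) x w
      = fderiv ℝ (fderiv ℝ f) x w v := fun v w => by
    rw [fderiv_clm_apply (h1.diff x) (differentiableAt_const _)]
    simp
  unfold pd
  rw [key, key]
  have hs : IsSymmSndFDerivAt ℝ f x :=
    ContDiffAt.isSymmSndFDerivAt (n := (⊤ : ℕ∞)) (ContDiff.contDiffAt h) (by
      simp only [minSmoothness_of_isRCLikeNormedField]; exact WithTop.coe_le_coe.2 (le_top : (2 : ℕ∞) ≤ ⊤))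
  exact hs _ _

theorem Dv_add {A : Fin n → Vec n → Mat k} {f g : Vec n → Fin k → ℝ} (hf : Sm f) (hg : Sm g)
    (a : Fin n) (x : Vec n) : Dv A a (fun y => f y + g y) x = Dv A a f x + Dv A a g x := by
  unfold Dv; rw [pd_add hf hg, matVec_add]; abel

theorem Dv_sub {A : Fin n → Vec n → Mat k} {f g : Vec n → Fin k → ℝ} (hf : Sm f) (hg : Sm g)
    (a : Fin n) (x : Vec n) : Dv A a (fun y => f y - g y) x = Dv A a f x - Dv A a g x := by
  unfold Dv; rw [pd_sub hf hg, matVec_sub]; abel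

theorem Dv_neg {A : Fin n → Vec n → Mat k} {f : Vec n → Fin k → ℝ}
    (a : Fin n) (x : Vec n) : Dv A a (fun y => - f y) x = - Dv A a f x := by
  unfold Dv pd; rw [fderiv_fun_neg, matVec_neg, ContinuousLinearMap.neg_apply]; abel

theorem Dv_sum {A : Fin n → Vec n → Mat k} {ι : Type*} (s : Finset ι)
    {f : ι → Vec n → Fin k → ℝ} (hf : ∀ i, Sm (f i))
    (a : Fin n) (x : Vec n) : Dv A a (fun y => ∑ i ∈ s, f i y) x = ∑ i ∈ s, Dv A a (f i) x := by
  unfold Dv pd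
  rw [fderiv_fun_sum (fun i _ => (hf i).diff x), matVec_sum, ContinuousLinearMap.sum_apply,
    Finset.sum_add_distrib]

theorem Dv_matVec {A : Fin n → Vec n → Mat k} {S : Vec n → Mat k} {φ : Vec n → Fin k → ℝ}
    (hS : Sm S) (hφ : Sm φ) (a : Fin n) (x : Vec n) :
    Dv A a (fun y => matVec (S y) (φ y)) x
      = matVec (Dm A a S x) (φ x) + matVec (S x) (Dv A a φ x) := by
  unfold Dv Dm
  rw [pd_matVec hS hφ, sub_matVec, add_matVec, matVec_add, matMul_matVec, matMul_matVec]
  abel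

theorem Dv_comm {A : Fin n → Vec n → Mat k} (hA : ∀ a, Sm (A a)) {φ : Vec n → Fin k → ℝ}
    (hφ : Sm φ) (a b : Fin n) (x : Vec n) :
    Dv A a (fun y => Dv A b φ y) x - Dv A b (fun y => Dv A a φ y) x
      = matVec (curv A a b x) (φ x) := by
  unfold Dv curv
  rw [pd_add (sm_pd hφ b) (sm_matVec (hA b) hφ), pd_add (sm_pd hφ a) (sm_matVec (hA a) hφ),
    pd_matVec (hA b) hφ, pd_matVec (hA a) hφ, pd_comm hφ a b]
  simp only [sub_matVec, add_matVec, matVec_add, matMul_matVec]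
  abel

theorem curv_neg (A : Fin n → Vec n → Mat k) (a b : Fin n) (x : Vec n) (v : Fin k → ℝ) :
    matVec (curv A a b x) v = - matVec (curv A b a x) v := by
  unfold curv
  simp only [sub_matVec, add_matVec]
  abel

end helpers

/-- Flat-chart form of the second part of Lemma 3.1: `δ^D M^D = −ι(δ^D F)`, i.e.
`−Σ_b D_b((M^D ψ)_b) = Σ_{a,b} (D_a F_{ab}) ψ_b`. -/
theorem dD_comp_MD (n k : ℕ) (hn : 1 ≤ n) (hk : 1 ≤ k)
    (A : Fin n → Vec n → Mat k) (hA : ∀ a, ContDiff ℝ (⊤ : ℕ∞) (A a))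
    (ψ : Fin n → Vec n → Fin k → ℝ) (hψ : ∀ a, ContDiff ℝ (⊤ : ℕ∞) (ψ a))
    (b : Fin n) (x : Vec n) :
    -(∑ c, Dv A c (fun y => MD A ψ c y) x)
      = ∑ c, matVec (∑ a, Dm A a (curv A a c) x) (ψ c x) := by
  have hD : ∀ a c, Sm (fun y => Dv A a (ψ c) y) := fun a c => sm_Dv hA (hψ c) a
  have hG : ∀ a c, Sm (fun y => Dv A a (ψ c) y - Dv A c (ψ a) y) :=
    fun a c => (hD a c).sub (hD c a)
  have hDG : ∀ a c, Sm (fun y => Dv A a (fun y => Dv A a (ψ c) y - Dv A c (ψ a) y) y) :=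
    fun a c => sm_Dv hA (hG a c) a
  have hF : ∀ a c, Sm (fun y => matVec (curv A c a y) (ψ a y)) :=
    fun a c => sm_matVec (sm_curv hA c a) (hψ a)
  have e1 : ∀ c, Dv A c (fun y => MD A ψ c y) x =
      -(∑ a, Dv A c (fun y => Dv A a (fun y => Dv A a (ψ c) y - Dv A c (ψ a) y) y) x)
      - ∑ a, (matVec (Dm A c (curv A c a) x) (ψ a x)
          + matVec (curv A c a x) (Dv A c (ψ a) x)) := by
    intro c
    unfold MD
    rw [Dv_sub (ContDiff.neg (ContDiff.sum fun a _ => hDG a c)) (ContDiff.sum fun a _ => hF a c),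
      Dv_neg, Dv_sum _ (fun a => hDG a c), Dv_sum _ (fun a => hF a c)]
    congr 1
    exact Finset.sum_congr rfl fun a _ => Dv_matVec (sm_curv hA c a) (hψ a) c x
  have e2 : ∑ c, ∑ a, Dv A c (fun y => Dv A a (fun y => Dv A a (ψ c) y - Dv A c (ψ a) y) y) x
      = - ∑ c, ∑ a, matVec (curv A c a x) (Dv A c (ψ a) x) := by
    have hsw : ∀ f : Fin n → Fin n → Fin k → ℝ, ∑ c, ∑ a, f c a = ∑ c, ∑ a, f a c :=
      fun f => Finset.sum_comm
    have l1 : ∀ c a, Dv A c (fun y => Dv A a (fun y => Dv A a (ψ c) y - Dv A c (ψ a) y) y) x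
        = Dv A c (fun y => Dv A a (fun y => Dv A a (ψ c) y) y) x
          - Dv A c (fun y => Dv A a (fun y => Dv A c (ψ a) y) y) x := by
      intro c a
      have : (fun y => Dv A a (fun y => Dv A a (ψ c) y - Dv A c (ψ a) y) y)
        = fun y => Dv A a (fun y => Dv A a (ψ c) y) y - Dv A a (fun y => Dv A c (ψ a) y) y :=
        funext fun y => Dv_sub (hD a c) (hD c a) a y
      rw [this, Dv_sub (sm_Dv hA (hD a c) a) (sm_Dv hA (hD c a) a)]
    simp only [l1, Finset.sum_sub_distrib]
    rw [hsw (fun c a => Dv A c (fun y => Dv A a (fun y => Dv A a (ψ c) y) y) x),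
      ← Finset.sum_sub_distrib, ← Finset.sum_neg_distrib]
    refine Finset.sum_congr rfl fun c _ => ?_
    rw [← Finset.sum_sub_distrib, ← Finset.sum_neg_distrib]
    refine Finset.sum_congr rfl fun a _ => ?_
    rw [Dv_comm hA (hD c a) a c x]
    exact curv_neg A a c x _
  simp only [e1, sum_matVec, Finset.sum_sub_distrib, Finset.sum_neg_distrib,
    Finset.sum_add_distrib, e2]
  rw [Finset.sum_comm (f := fun c a => matVec (Dm A a (curv A a c) x) (ψ c x))]
  abel
end
end

section
/- Fix integers n, k ≥ 1, and let A and B be connection forms on ℝⁿ. For t ∈ ℝ let Aᵗ = A + tB, with curvature Fᵗ. Then for every index b and every x ∈ ℝⁿ, the function t ↦ −Σ_a (∂_a Fᵗ_{ab} + Aᵗ_a Fᵗ_{ab} − Fᵗ_{ab} Aᵗ_a)(x) is differentiable at t = 0 with derivative (M^D B)_b(x), where (M^D B)_b = −Σ_a D_a(D_a B_b − D_b B_a) − Σ_a (F_{ba} B_a − B_a F_{ba}) and D_a S = ∂_a S + A_a S − S A_a on matrix-valued maps. (Equation (3.3): the derivative of the Yang–Mills current along a deformation is M^D applied to the infinitesimal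 deformation; hence for A Yang–Mills, an infinitesimal deformation B is through Yang–Mills connections to first order if and only if M^D B = 0.) -/
noncomputable section

/-- The middle operator `M^D` on `End(V)`-valued (matrix-valued) 1-forms:
`(M^D B)_b = −Σ_a D_a(D_a B_b − D_b B_a) − Σ_a (F_{ba} B_a − B_a F_{ba})`. -/
def MDm {n k : ℕ} (A : Fin n → Vec n → Mat k) (B : Fin n → Vec n → Mat k)
    (b : Fin n) (x : Vec n) : Mat k :=
  -(∑ a, Dm A a (fun y => Dm A a (B b) y - Dm A b (B a) y) x)
    - ∑ a, (matMul (curv A b a x) (B a x) - matMul (B a x) (curv A b a x))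

theorem matMul_add_l {k : ℕ} (M N P : Mat k) : matMul (M + N) P = matMul M P + matMul N P := by
  funext i j; simp [matMul, add_mul, Finset.sum_add_distrib]

theorem matMul_add_r {k : ℕ} (M N P : Mat k) : matMul P (M + N) = matMul P M + matMul P N := by
  funext i j; simp [matMul, mul_add, Finset.sum_add_distrib]

theorem matMul_smul_l {k : ℕ} (t : ℝ) (M P : Mat k) : matMul (t • M) P = t • matMul M P := by
  funext i j; simp [matMul, Finset.mul_sum, mul_assoc]

theorem matMul_smul_r {k : ℕ} (t : ℝ) (M P : Mat k) : matMul P (t • M) = t • matMul P M := by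
  funext i j; simp [matMul, Finset.mul_sum, mul_left_comm]

theorem matMul_neg_l {k : ℕ} (M P : Mat k) : matMul (-M) P = - matMul M P := by
  funext i j; simp [matMul]

theorem matMul_neg_r {k : ℕ} (M P : Mat k) : matMul P (-M) = - matMul P M := by
  funext i j; simp [matMul]

theorem matMul_smooth {n k : ℕ} {f g : Vec n → Mat k} (hf : ContDiff ℝ (⊤ : ℕ∞) f)
    (hg : ContDiff ℝ (⊤ : ℕ∞) g) : ContDiff ℝ (⊤ : ℕ∞) (fun y => matMul (f y) (g y)) := by
  have hf' : ∀ i j, ContDiff ℝ (⊤ : ℕ∞) (fun y => f y i j) := fun i j =>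
    contDiff_pi.1 (contDiff_pi.1 hf i) j
  have hg' : ∀ i j, ContDiff ℝ (⊤ : ℕ∞) (fun y => g y i j) := fun i j =>
    contDiff_pi.1 (contDiff_pi.1 hg i) j
  refine contDiff_pi.2 fun i => contDiff_pi.2 fun j => ?_
  unfold matMul
  exact ContDiff.sum fun l _ => (hf' i l).mul (hg' l j)

theorem pd_smooth {n k : ℕ} (a : Fin n) {f : Vec n → Mat k} (hf : ContDiff ℝ (⊤ : ℕ∞) f) :
    ContDiff ℝ (⊤ : ℕ∞) (pd a f) := by
  unfold pd
  have h : ContDiff ℝ (⊤ : ℕ∞) (fderiv ℝ f) := hf.fderiv_right (by simp)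
  exact h.clm_apply contDiff_const

theorem Dm_smooth {n k : ℕ} {A : Fin n → Vec n → Mat k} (hA : ∀ a, ContDiff ℝ (⊤ : ℕ∞) (A a))
    (a : Fin n) {f : Vec n → Mat k} (hf : ContDiff ℝ (⊤ : ℕ∞) f) :
    ContDiff ℝ (⊤ : ℕ∞) (Dm A a f) :=
  ((pd_smooth a hf).add (matMul_smooth (hA a) hf)).sub (matMul_smooth hf (hA a))

theorem curv_smooth {n k : ℕ} {A : Fin n → Vec n → Mat k} (hA : ∀ a, ContDiff ℝ (⊤ : ℕ∞) (A a))
    (a b : Fin n) : ContDiff ℝ (⊤ : ℕ∞) (curv A a b) :=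
  (((pd_smooth a (hA b)).sub (pd_smooth b (hA a))).add (matMul_smooth (hA a) (hA b))).sub
    (matMul_smooth (hA b) (hA a))

theorem pd_add_smul {n k : ℕ} (a : Fin n) {f g : Vec n → Mat k} (hf : ContDiff ℝ (⊤ : ℕ∞) f)
    (hg : ContDiff ℝ (⊤ : ℕ∞) g) (t : ℝ) (x : Vec n) :
    pd a (fun y => f y + t • g y) x = pd a f x + t • pd a g x := by
  have hf' : HasFDerivAt f (fderiv ℝ f x) x := (hf.differentiable (by simp) x).hasFDerivAt
  have hg' : HasFDerivAt g (fderiv ℝ g x) x := (hg.differentiable (by simp) x).hasFDerivAt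
  have h : HasFDerivAt (fun y => f y + t • g y) (fderiv ℝ f x + t • fderiv ℝ g x) x :=
    hf'.add (hg'.const_smul t)
  unfold pd
  rw [h.fderiv]
  rfl

theorem curv_expand {n k : ℕ} {A B : Fin n → Vec n → Mat k}
    (hA : ∀ a, ContDiff ℝ (⊤ : ℕ∞) (A a)) (hB : ∀ a, ContDiff ℝ (⊤ : ℕ∞) (B a))
    (t : ℝ) (a b : Fin n) :
    curv (fun c y => A c y + t • B c y) a b = fun y =>
      (curv A a b y + t • (Dm A a (B b) y - Dm A b (B a) y)) +
        (t ^ 2) • (matMul (B a y) (B b y) - matMul (B b y) (B a y)) := by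
  funext y
  simp only [curv, Dm, pd_add_smul _ (hA _) (hB _), matMul_add_l, matMul_add_r, matMul_smul_l,
    matMul_smul_r]
  module

theorem curv_anti {n k : ℕ} (A : Fin n → Vec n → Mat k) (a b : Fin n) (x : Vec n) :
    curv A b a x = - curv A a b x := by
  unfold curv; abel

theorem poly_deriv {k : ℕ} (c0 c1 c2 c3 : Mat k) :
    HasDerivAt (fun t : ℝ => c0 + t • c1 + t ^ 2 • c2 + t ^ 3 • c3) c1 0 := by
  have h1 := (hasDerivAt_id (0 : ℝ)).smul_const c1
  have h2 := (hasDerivAt_pow 2 (0 : ℝ)).smul_const c2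
  have h3 := (hasDerivAt_pow 3 (0 : ℝ)).smul_const c3
  have h := ((h1.const_add c0).add h2).add h3
  refine h.congr_deriv ?_
  simp

theorem Dm_expand {n k : ℕ} (A B : Fin n → Vec n → Mat k) (a : Fin n)
    {F G H : Vec n → Mat k} (hF : ContDiff ℝ (⊤ : ℕ∞) F) (hG : ContDiff ℝ (⊤ : ℕ∞) G)
    (hH : ContDiff ℝ (⊤ : ℕ∞) H) (t : ℝ) (x : Vec n) :
    Dm (fun c y => A c y + t • B c y) a (fun y => (F y + t • G y) + (t ^ 2) • H y) x =
      Dm A a F x + t • (Dm A a G x + (matMul (B a x) (F x) - matMul (F x) (B a x)))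
       + t ^ 2 • (Dm A a H x + (matMul (B a x) (G x) - matMul (G x) (B a x)))
       + t ^ 3 • (matMul (B a x) (H x) - matMul (H x) (B a x)) := by
  simp only [Dm, pd_add_smul a (hF.add (hG.const_smul t)) hH, pd_add_smul a hF hG, matMul_add_l,
    matMul_add_r, matMul_smul_l, matMul_smul_r]
  module

/-- Equation (3.3): the derivative at `t = 0` of the Yang–Mills current
`−δ^{Dᵗ} Fᵗ` of the deformed connection `Aᵗ = A + tB` is `(M^D B)_b`. -/
theorem yangMillsCurrent_variation (n k : ℕ) (hn : 1 ≤ n) (hk : 1 ≤ k)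
    (A B : Fin n → Vec n → Mat k)
    (hA : ∀ a, ContDiff ℝ (⊤ : ℕ∞) (A a)) (hB : ∀ a, ContDiff ℝ (⊤ : ℕ∞) (B a))
    (b : Fin n) (x : Vec n) :
    HasDerivAt
      (fun t : ℝ =>
        -(∑ a, Dm (fun c y => A c y + t • B c y) a
            (curv (fun c y => A c y + t • B c y) a b) x))
      (MDm A B b x) 0 := by
  have key : ∀ a, HasDerivAt (fun t : ℝ => Dm (fun c y => A c y + t • B c y) a
      (curv (fun c y => A c y + t • B c y) a b) x)
      (Dm A a (fun y => Dm A a (B b) y - Dm A b (B a) y) x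
        + (matMul (curv A b a x) (B a x) - matMul (B a x) (curv A b a x))) 0 := by
    intro a
    have hF := curv_smooth hA a b
    have hG : ContDiff ℝ (⊤ : ℕ∞) (fun y => Dm A a (B b) y - Dm A b (B a) y) :=
      (Dm_smooth hA a (hB b)).sub (Dm_smooth hA b (hB a))
    have hH : ContDiff ℝ (⊤ : ℕ∞) (fun y => matMul (B a y) (B b y) - matMul (B b y) (B a y)) :=
      (matMul_smooth (hB a) (hB b)).sub (matMul_smooth (hB b) (hB a))
    have e := fun t : ℝ => Dm_expand A B a hF hG hH t x
    simp only [curv_expand hA hB]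
    simp only [e]
    refine (poly_deriv _ _ _ _).congr_deriv ?_
    rw [curv_anti A a b x, matMul_neg_l, matMul_neg_r]
    abel
  have h := (HasDerivAt.fun_sum (u := Finset.univ) fun a _ => key a).neg
  refine h.congr_deriv ?_
  rw [MDm, Finset.sum_add_distrib]
  abel
end
end
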